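/- Assume (B) with α > 0 and L > L_f, and assume in addition that ∇f : L²(Ω) → L²(Ω) is completely continuous, i.e., v_k ⇀ v weakly in L²(Ω) implies ∇f(v_k) → ∇f(v) strongly in L²(Ω). Let (u_k)_{k≥0} be a sequence generated by the proximal gradient algorithm with multipliers λ_{k+1} ≥ 0 of the subproblems (satisfying λ_{k+1}(‖u_{k+1}‖₀ − τ) = 0 and, for a.e. x, u_{k+1}(x) ≠ 0 implies |u_{k+1}(x)| ≥ √(2λ_{k+1}/(L+α))), and suppose liminf_{k→∞} λ_k > 0. Then whenever a subsequence satisfies u_{k_n} ⇀ u̅ weakly in L²(Ω), it in fact converges strongly, u_{k_n} → u̅ in L²(Ω); and for almost all x ∈ Ω, u̅(x) ≠ 0 implies u̅(x) = −(1/α) ∇f(u̅)(x). -/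

import Mathlib

open MeasureTheory Set Filter Topology ENNReal NNReal

noncomputable section

variable {d : ℕ}

/-- The Lebesgue measure on `ℝ^d` restricted to `Ω`. -/
def mOmega (Ω : Set (Fin d → ℝ)) : Measure (Fin d → ℝ) := volume.restrict Ω

/-- `|t|₀ = 1` if `t ≠ 0`, and `0` if `t = 0`. -/
def zeroInd (t : ℝ) : ℝ := if t = 0 then 0 else 1

/-- Assumption (B): `f` is bounded from below and Fréchet differentiable with gradient
`gradf` (the Riesz representative of the derivative), `gradf` is Lipschitz with constant
`Lf`, and `α ≥ 0`. -/
structure AssumptionB (Ω : Set (Fin d → ℝ))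
    (f : Lp ℝ 2 (mOmega Ω) → ℝ) (gradf : Lp ℝ 2 (mOmega Ω) → Lp ℝ 2 (mOmega Ω))
    (Lf α : ℝ) : Prop where
  bdd_below : ∃ c : ℝ, ∀ u, c ≤ f u
  deriv : ∀ u, HasFDerivAt f (innerSL ℝ (gradf u)) u
  lipschitz : ∀ u v, ‖gradf u - gradf v‖ ≤ Lf * ‖u - v‖
  alpha_nonneg : 0 ≤ α

/-- `u` solves the proximal-gradient subproblem `(S_k)` with data `u_k`: it is feasible for
the `L⁰` constraint and minimizes
`f(u_k) + ∫ ∇f(u_k)(u − u_k) + (L/2)‖u − u_k‖² + (α/2)‖u‖²` subject to `‖u‖₀ ≤ τ`. -/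
def SolvesSub (Ω : Set (Fin d → ℝ))
    (f : Lp ℝ 2 (mOmega Ω) → ℝ) (gradf : Lp ℝ 2 (mOmega Ω) → Lp ℝ 2 (mOmega Ω))
    (α L τ : ℝ) (uk u : Lp ℝ 2 (mOmega Ω)) : Prop :=
  mOmega Ω {x | u x ≠ 0} ≤ ENNReal.ofReal τ ∧
    ∀ v : Lp ℝ 2 (mOmega Ω), mOmega Ω {x | v x ≠ 0} ≤ ENNReal.ofReal τ →
      f uk + ∫ x, gradf uk x * (u x - uk x) ∂mOmega Ω
          + L / 2 * ‖u - uk‖ ^ 2 + α / 2 * ‖u‖ ^ 2 ≤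
        f uk + ∫ x, gradf uk x * (v x - uk x) ∂mOmega Ω
          + L / 2 * ‖v - uk‖ ^ 2 + α / 2 * ‖v‖ ^ 2

/-!
Since `K < L`, the objective `f + α/2 ‖·‖²` drops by a multiple of `‖u (k+1) - u k‖²` at each step,
so these squares are summable; by monotone convergence `u (k+1) x - u k x → 0` for almost every `x`.
The multipliers keep the nonzero values of the iterates uniformly away from `0`, so almost every
point eventually either stays in the support of `u k` or stays out of it. On its support a step
satisfies the first-order condition `α u (k+1) = -(G (u k) + L (u (k+1) - u k))`. Complete
continuity makes the right-hand side converge strongly along the subsequence, and cutting off by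
the almost everywhere stabilizing supports preserves strong convergence. The strong limit is
`-1/α` times `G ubar` cut off by the limiting support, and it agrees with the weak limit `ubar`.
-/

open scoped RealInnerProductSpace

section InnerProductSpace

variable {H : Type*} [NormedAddCommGroup H] [InnerProductSpace ℝ H]

/-- Weak convergence `v i ⇀ a` in a real inner product space, tested against the vectors of the
space itself, which in a Hilbert space are all the continuous functionals. -/
def WeaklyTendsto {ι : Type*} (v : ι → H) (l : Filter ι) (a : H) : Prop :=
  ∀ φ, Tendsto (fun i => ⟪v i, φ⟫) l (𝓝 ⟪a, φ⟫)

/-- Complete continuity of a nonlinear map: it sends weakly convergent sequences to strongly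
convergent ones. -/
def CompletelyContinuous (G : H → H) : Prop :=
  ∀ (v : ℕ → H) (a : H), WeaklyTendsto v atTop a → Tendsto (fun k => G (v k)) atTop (𝓝 (G a))

/-- The objective of the proximal-gradient subproblem at `u` with gradient `g`, without the
constant `f u`. -/
def proxModel (g u : H) (L α : ℝ) (v : H) : ℝ :=
  ⟪g, v - u⟫ + L / 2 * ‖v - u‖ ^ 2 + α / 2 * ‖v‖ ^ 2

/-- `w` is a proximal-gradient step from `u` with gradient `g` under the constraint set `C`. -/
def IsProxStep (C : Set H) (g u : H) (L α : ℝ) (w : H) : Prop :=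
  w ∈ C ∧ IsMinOn (proxModel g u L α) C w

lemma WeaklyTendsto.eq_of_tendsto {ι : Type*} {v : ι → H} {l : Filter ι} [l.NeBot] {a b : H}
    (hweak : WeaklyTendsto v l a) (hstrong : Tendsto v l (𝓝 b)) : a = b :=
  ext_inner_right ℝ fun φ => tendsto_nhds_unique (hweak φ) (hstrong.inner tendsto_const_nhds)

lemma le_add_inner_add_sq_of_lipschitz_gradient {f : H → ℝ} {G : H → H} {K : ℝ}
    (hf : ∀ u, HasFDerivAt f (innerSL ℝ (G u)) u) (hG : ∀ u v, ‖G u - G v‖ ≤ K * ‖u - v‖)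
    (u v : H) : f v ≤ f u + ⟪G u, v - u⟫ + K / 2 * ‖v - u‖ ^ 2 := by
  obtain ⟨h, rfl⟩ : ∃ h, v = u + h := ⟨v - u, by abel⟩
  let φ : ℝ → ℝ := fun t => f (u + t • h) - t * ⟪G u, h⟫ - K / 2 * ‖h‖ ^ 2 * t ^ 2
  have hφ (t : ℝ) :
      HasDerivAt φ (⟪G (u + t • h), h⟫ - ⟪G u, h⟫ - K / 2 * ‖h‖ ^ 2 * (2 * t)) t := by
    have hline : HasDerivAt (fun t : ℝ => u + t • h) h t := by
      simpa using ((hasDerivAt_id t).smul_const h).const_add u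
    have hlin : HasDerivAt (fun t : ℝ => t * ⟪G u, h⟫) ⟪G u, h⟫ t := by
      simpa using (hasDerivAt_id t).mul_const ⟪G u, h⟫
    have hquad :
        HasDerivAt (fun t : ℝ => K / 2 * ‖h‖ ^ 2 * t ^ 2) (K / 2 * ‖h‖ ^ 2 * (2 * t)) t := by
      simpa using (hasDerivAt_pow 2 t).const_mul (K / 2 * ‖h‖ ^ 2)
    exact (((hf (u + t • h)).comp_hasDerivAt t hline).sub hlin).sub hquad
  have hslope {t : ℝ} (ht : 0 < t) : ⟪G (u + t • h), h⟫ - ⟪G u, h⟫ ≤ K * ‖h‖ ^ 2 * t :=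
    calc ⟪G (u + t • h), h⟫ - ⟪G u, h⟫
        = ⟪G (u + t • h) - G u, h⟫ := (inner_sub_left _ _ _).symm
      _ ≤ ‖G (u + t • h) - G u‖ * ‖h‖ := real_inner_le_norm _ _
      _ ≤ K * ‖u + t • h - u‖ * ‖h‖ := by gcongr; exact hG _ _
      _ = K * ‖h‖ ^ 2 * t := by
        rw [add_sub_cancel_left, norm_smul, Real.norm_of_nonneg ht.le]; ring
  have hanti : AntitoneOn φ (Icc 0 1) := by
    refine antitoneOn_of_deriv_nonpos (convex_Icc 0 1)
      (fun t _ => (hφ t).continuousAt.continuousWithinAt)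
      (fun t _ => (hφ t).differentiableAt.differentiableWithinAt) fun t ht => ?_
    rw [interior_Icc] at ht
    rw [(hφ t).deriv]
    linarith [hslope ht.1]
  have hle : f (u + h) - ⟪G u, h⟫ - K / 2 * ‖h‖ ^ 2 ≤ f u := by
    simpa [φ] using hanti (left_mem_Icc.2 zero_le_one) (right_mem_Icc.2 zero_le_one) zero_le_one
  rw [add_sub_cancel_left]
  linarith

lemma proxModel_add_smul (g u w v : H) (L α t : ℝ) :
    proxModel g u L α (w + t • v) =
      proxModel g u L α w + t * ⟪g + L • (w - u) + α • w, v⟫ + (L + α) / 2 * ‖v‖ ^ 2 * t ^ 2 := by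
  have hshift : w + t • v - u = (w - u) + t • v := by abel
  simp only [proxModel, hshift, norm_add_sq_real, inner_add_left, inner_add_right,
    real_inner_smul_left, real_inner_smul_right, norm_smul, mul_pow, Real.norm_eq_abs, sq_abs]
  ring

namespace IsProxStep

variable {C : Set H} {g u w : H} {L α : ℝ}

lemma inner_eq_zero (hw : IsProxStep C g u L α w) {v : H} (hv : ∀ t : ℝ, w + t • v ∈ C) :
    ⟪g + L • (w - u) + α • w, v⟫ = 0 := by
  have hdiscrim := discrim_le_zero (a := (L + α) / 2 * ‖v‖ ^ 2)
    (b := ⟪g + L • (w - u) + α • w, v⟫) (c := 0) fun t => by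
      have hmin := isMinOn_iff.1 hw.2 _ (hv t)
      rw [proxModel_add_smul] at hmin
      linarith
  rw [discrim, mul_zero, sub_zero] at hdiscrim
  exact pow_eq_zero_iff two_ne_zero |>.1 (hdiscrim.antisymm (sq_nonneg _))

lemma sufficient_decrease {f : H → ℝ} {G : H → H} {K : ℝ}
    (hf : ∀ u, HasFDerivAt f (innerSL ℝ (G u)) u) (hG : ∀ u v, ‖G u - G v‖ ≤ K * ‖u - v‖)
    (hw : IsProxStep C (G u) u L α w) (hu : u ∈ C) :
    f w + α / 2 * ‖w‖ ^ 2 + (L - K) / 2 * ‖w - u‖ ^ 2 ≤ f u + α / 2 * ‖u‖ ^ 2 := by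
  have hmin : ⟪G u, w - u⟫ + L / 2 * ‖w - u‖ ^ 2 + α / 2 * ‖w‖ ^ 2 ≤ α / 2 * ‖u‖ ^ 2 := by
    simpa [proxModel] using isMinOn_iff.1 hw.2 u hu
  linarith [le_add_inner_add_sq_of_lipschitz_gradient hf hG u w]

end IsProxStep

lemma summable_of_add_le_of_bddBelow {F e : ℕ → ℝ} (hF : BddBelow (range F))
    (he : ∀ n, 0 ≤ e n) (hstep : ∀ n, F (n + 1) + e n ≤ F n) : Summable e := by
  obtain ⟨c, hc⟩ := hF
  have hsum (n : ℕ) : ∑ i ∈ Finset.range n, e i ≤ F 0 - F n := by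
    rw [← Finset.sum_range_sub']
    exact Finset.sum_le_sum fun i _ => by linarith [hstep i]
  exact summable_of_sum_range_le he fun n => (hsum n).trans (sub_le_sub_left (hc ⟨n, rfl⟩) _)

lemma summable_norm_sub_sq_of_isProxStep {C : Set H} {f : H → ℝ} {G : H → H} {K L α : ℝ}
    (hf_bdd : BddBelow (range f)) (hf : ∀ u, HasFDerivAt f (innerSL ℝ (G u)) u)
    (hG : ∀ u v, ‖G u - G v‖ ≤ K * ‖u - v‖) (hKL : K < L) (hα : 0 ≤ α) {u : ℕ → H}
    (hu : ∀ k, IsProxStep C (G (u k)) (u k) L α (u (k + 1))) :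
    Summable fun k => ‖u (k + 1) - u k‖ ^ 2 := by
  have hLK : 0 < (L - K) / 2 := by linarith
  obtain ⟨c, hc⟩ := hf_bdd
  have hobj_bdd : BddBelow (range fun k => f (u (k + 1)) + α / 2 * ‖u (k + 1)‖ ^ 2) :=
    ⟨c, forall_mem_range.2 fun k => (hc ⟨_, rfl⟩).trans (le_add_of_nonneg_right (by positivity))⟩
  -- The first step is left out because `u 0` need not be feasible.
  have hscaled : Summable fun k => (L - K) / 2 * ‖u (k + 1 + 1) - u (k + 1)‖ ^ 2 :=
    summable_of_add_le_of_bddBelow hobj_bdd (fun k => by positivity)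
      fun k => (hu (k + 1)).sufficient_decrease hf hG (hu k).1
  exact (summable_nat_add_iff (f := fun k => ‖u (k + 1) - u k‖ ^ 2) 1).1
    ((summable_mul_left_iff hLK.ne').1 hscaled)

end InnerProductSpace

lemma subsingleton_of_norm_sub_le_neg_mul {H : Type*} [NormedAddCommGroup H]
    {G : H → H} {K : ℝ} (hG : ∀ u v, ‖G u - G v‖ ≤ K * ‖u - v‖)
    (hK : K < 0) : Subsingleton H := by
  refine ⟨fun u v => sub_eq_zero.1 (norm_eq_zero.1 ?_)⟩
  nlinarith [hG u v, norm_nonneg (G u - G v), norm_nonneg (u - v)]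

lemma eventuallyConst_ne_zero_of_tendsto_sub {E : Type*} [NormedAddCommGroup E] {a : ℕ → E}
    {σ : ℝ} (hσ : 0 < σ) (hsub : Tendsto (fun k => a (k + 1) - a k) atTop (𝓝 0))
    (hgap : ∀ᶠ k in atTop, a k ≠ 0 → σ ≤ ‖a k‖) :
    EventuallyConst (fun k => a k ≠ 0) atTop := by
  have hiff : ∀ᶠ k in atTop, (a (k + 1) ≠ 0) = (a k ≠ 0) := by
    filter_upwards [hgap, (tendsto_add_atTop_nat 1).eventually hgap,
      hsub.norm.eventually_lt_const (by simpa using hσ)] with k hk hk' hlt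
    refine propext ⟨fun hne hzero => ?_, fun hne hzero => ?_⟩
    · exact (hk' hne).not_gt (by simpa [hzero] using hlt)
    · exact (hk hne).not_gt (by simpa [hzero] using hlt)
  exact eventuallyConst_atTop_nat.2 (eventually_atTop.1 hiff)

section Lp

variable {X E : Type*} [MeasurableSpace X] {μ : Measure X} [NormedAddCommGroup E] {p : ℝ≥0∞}

/-- The functions in `L^p` whose support has measure at most `t`, that is, the constraint
`‖v‖₀ ≤ t`. -/
def sparseSet (t : ℝ≥0∞) : Set (Lp E p μ) := {v | μ {x | v x ≠ 0} ≤ t}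

lemma measurableSet_support_Lp (v : Lp E p μ) : MeasurableSet {x | v x ≠ 0} :=
  (Lp.stronglyMeasurable v).measurableSet_support

lemma ae_tendsto_zero_of_summable_norm_rpow {w : ℕ → Lp E p μ} (hp : p ≠ 0) (hp' : p ≠ ∞)
    (hw : Summable fun n => ‖w n‖ ^ p.toReal) :
    ∀ᵐ x ∂μ, Tendsto (fun n => w n x) atTop (𝓝 0) := by
  have hp_pos : 0 < p.toReal := ENNReal.toReal_pos hp hp'
  have hmeas (n : ℕ) : AEMeasurable (fun x => ‖w n x‖ₑ ^ p.toReal) μ :=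
    (Lp.aestronglyMeasurable (w n)).enorm.pow_const _
  have hlintegral (n : ℕ) :
      ∫⁻ x, ‖w n x‖ₑ ^ p.toReal ∂μ = ENNReal.ofReal (‖w n‖ ^ p.toReal) := by
    rw [Lp.norm_def, ← ENNReal.ofReal_rpow_of_nonneg ENNReal.toReal_nonneg hp_pos.le,
      ENNReal.ofReal_toReal (Lp.eLpNorm_ne_top (w n)),
      eLpNorm_eq_lintegral_rpow_enorm_toReal hp hp', one_div, ENNReal.rpow_inv_rpow hp_pos.ne']
  have htsum : ∫⁻ x, ∑' n, ‖w n x‖ₑ ^ p.toReal ∂μ ≠ ∞ := by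
    rw [lintegral_tsum hmeas]
    simpa only [hlintegral] using hw.tsum_ofReal_ne_top
  filter_upwards [ae_lt_top' (AEMeasurable.tsum hmeas) htsum] with x hx
  have hrpow := (ENNReal.tendsto_atTop_zero_of_tsum_ne_top hx.ne).ennrpow_const p.toReal⁻¹
  simp only [ENNReal.rpow_rpow_inv hp_pos.ne', ENNReal.zero_rpow_of_pos (inv_pos.2 hp_pos)] at hrpow
  exact tendsto_zero_iff_enorm_tendsto_zero.2 hrpow

/-- The set of points lying in the support of all but finitely many terms of a sequence. -/
def eventualSupport (u : ℕ → Lp E p μ) : Set X := {x | ∀ᶠ k in atTop, u k x ≠ 0}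

lemma measurableSet_eventualSupport (u : ℕ → Lp E p μ) : MeasurableSet (eventualSupport u) := by
  have hliminf : eventualSupport u = liminf (fun k => {x | u k x ≠ 0}) atTop := by
    ext x
    simp [eventualSupport, mem_liminf_iff_eventually_mem]
  rw [hliminf]
  exact MeasurableSet.measurableSet_liminf fun k => measurableSet_support_Lp (u k)

lemma ae_eventually_mem_support_iff {u : ℕ → Lp E p μ} (hp : p ≠ 0) (hp' : p ≠ ∞)
    (hsum : Summable fun k => ‖u (k + 1) - u k‖ ^ p.toReal) {σ : ℝ} (hσ : 0 < σ)
    (hgap : ∀ᶠ k in atTop, ∀ᵐ x ∂μ, u k x ≠ 0 → σ ≤ ‖u k x‖) :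
    ∀ᵐ x ∂μ, ∀ᶠ k in atTop, (x ∈ {y | u k y ≠ 0} ↔ x ∈ eventualSupport u) := by
  obtain ⟨N, hN⟩ := eventually_atTop.1 hgap
  have hgap_ae : ∀ᵐ x ∂μ, ∀ k, N ≤ k → u k x ≠ 0 → σ ≤ ‖u k x‖ :=
    ae_all_iff.2 fun k => (em (N ≤ k)).elim
      (fun hk => (hN k hk).mono fun _ hx _ => hx) fun hk => .of_forall fun _ h => absurd h hk
  filter_upwards [ae_tendsto_zero_of_summable_norm_rpow hp hp' hsum, hgap_ae,
    ae_all_iff.2 fun k => Lp.coeFn_sub (u (k + 1)) (u k)] with x hx hgap_x hsub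
  simp only [hsub, Pi.sub_apply] at hx
  rcases eventuallyConst_pred.1 (eventuallyConst_ne_zero_of_tendsto_sub hσ hx
    (eventually_atTop.2 ⟨N, hgap_x⟩)) with hne | hzero
  · exact hne.mono fun k hk => iff_of_true hk hne
  · exact hzero.mono fun k hk => iff_of_false hk fun hne => (hne.and hzero).exists.elim
      fun _ h => h.2 h.1

variable [NormedSpace ℝ E] {S : Set X}

/-- Multiplication of an `L^p` function by the indicator function of a measurable set, as a
linear map. -/
def indicatorLp (hS : MeasurableSet S) : Lp E p μ →ₗ[ℝ] Lp E p μ where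
  toFun g := ((Lp.memLp g).indicator hS).toLp
  map_add' g h := by
    rw [← MemLp.toLp_add]
    exact MemLp.toLp_congr _ _ <|
      (Lp.coeFn_add g h).indicator.trans <| .of_eq <| indicator_add S g h
  map_smul' c g := by
    rw [← MemLp.toLp_const_smul]
    exact MemLp.toLp_congr _ _ <|
      (Lp.coeFn_smul c g).indicator.trans <| .of_eq <| indicator_const_smul S c g

lemma coeFn_indicatorLp (hS : MeasurableSet S) (g : Lp E p μ) :
    indicatorLp hS g =ᵐ[μ] S.indicator g :=
  ((Lp.memLp g).indicator hS).coeFn_toLp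

lemma norm_indicatorLp_apply_le (hS : MeasurableSet S) (g : Lp E p μ) :
    ‖indicatorLp hS g‖ ≤ ‖g‖ := by
  refine Lp.norm_le_norm_of_ae_le ?_
  filter_upwards [coeFn_indicatorLp hS g] with x hx
  exact (congrArg norm hx).trans_le (norm_indicator_le_norm_self _ _)

lemma indicatorLp_support (v : Lp E p μ) : indicatorLp (measurableSet_support_Lp v) v = v :=
  Lp.ext <| (coeFn_indicatorLp _ v).trans <| .of_eq <| indicator_support (f := v)

lemma tendsto_indicatorLp_of_ae_eventually_mem_iff [Fact (1 ≤ p)] {A : Set X} {T : ℕ → Set X}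
    (hp : p ≠ ∞) (hT : ∀ n, MeasurableSet (T n)) (hA : MeasurableSet A) (g : Lp E p μ)
    (hTA : ∀ᵐ x ∂μ, ∀ᶠ n in atTop, (x ∈ T n ↔ x ∈ A)) :
    Tendsto (fun n => indicatorLp (hT n) g) atTop (𝓝 (indicatorLp hA g)) := by
  have hp0 : p ≠ 0 := (zero_lt_one.trans_le Fact.out).ne'
  have hp_pos : 0 < p.toReal := ENNReal.toReal_pos hp0 hp
  let e (n : ℕ) (x : X) : ℝ≥0∞ := ‖(T n).indicator g x - A.indicator g x‖ₑ ^ p.toReal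
  have hlimit : Tendsto (fun n => ∫⁻ x, e n x ∂μ) atTop (𝓝 0) := by
    rw [← lintegral_zero (μ := μ)]
    refine tendsto_lintegral_of_dominated_convergence' (fun x => ‖g x‖ₑ ^ p.toReal)
      (fun n => ?_) (fun n => .of_forall fun x => ?_) ?_ ?_
    · have hg := Lp.aestronglyMeasurable g
      exact ((hg.indicator (hT n)).sub (hg.indicator hA)).enorm.pow_const _
    · by_cases hxT : x ∈ T n <;> by_cases hxA : x ∈ A <;> simp [e, hxT, hxA, hp_pos]
    · exact (lintegral_rpow_enorm_lt_top_of_eLpNorm_lt_top hp0 hp (Lp.eLpNorm_lt_top g)).ne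
    · filter_upwards [hTA] with x hx
      refine tendsto_const_nhds.congr' (hx.mono fun n hn => ?_)
      by_cases hxA : x ∈ A <;> simp [e, hn, hxA, hp_pos]
  rw [Lp.tendsto_Lp_iff_tendsto_eLpNorm']
  have hroot := hlimit.ennrpow_const (1 / p.toReal)
  rw [ENNReal.zero_rpow_of_pos (one_div_pos.2 hp_pos)] at hroot
  refine hroot.congr fun n => ?_
  rw [← eLpNorm_eq_lintegral_rpow_enorm_toReal hp0 hp]
  exact eLpNorm_congr_ae
    ((coeFn_indicatorLp (hT n) g).sub (coeFn_indicatorLp hA g)).symm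

lemma tendsto_indicatorLp [Fact (1 ≤ p)] {A : Set X} {T : ℕ → Set X} (hp : p ≠ ∞)
    (hT : ∀ n, MeasurableSet (T n)) (hA : MeasurableSet A) {b : ℕ → Lp E p μ} {g : Lp E p μ}
    (hTA : ∀ᵐ x ∂μ, ∀ᶠ n in atTop, (x ∈ T n ↔ x ∈ A)) (hb : Tendsto b atTop (𝓝 g)) :
    Tendsto (fun n => indicatorLp (hT n) (b n)) atTop (𝓝 (indicatorLp hA g)) := by
  have herror : Tendsto (fun n => indicatorLp (hT n) (b n - g)) atTop (𝓝 0) :=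
    squeeze_zero_norm (fun n => norm_indicatorLp_apply_le (hT n) (b n - g))
      (tendsto_iff_norm_sub_tendsto_zero.1 hb)
  simpa only [map_sub, sub_add_cancel, zero_add] using
    herror.add (tendsto_indicatorLp_of_ae_eventually_mem_iff hp hT hA g hTA)

lemma add_smul_indicatorLp_mem_sparseSet {t : ℝ≥0∞} {w : Lp E p μ} (hw : w ∈ sparseSet t)
    (r : Lp E p μ) (c : ℝ) :
    w + c • indicatorLp (measurableSet_support_Lp w) r ∈ sparseSet t := by
  refine (measure_mono_ae ?_).trans hw
  filter_upwards [Lp.coeFn_add w (c • indicatorLp (measurableSet_support_Lp w) r),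
    Lp.coeFn_smul c (indicatorLp (measurableSet_support_Lp w) r),
    coeFn_indicatorLp (measurableSet_support_Lp w) r] with x hadd hsmul hind hne hzero
  apply hne
  rw [hadd, Pi.add_apply, hsmul, Pi.smul_apply, hind, indicator_of_notMem (not_not.2 hzero), hzero,
    smul_zero, add_zero]

end Lp

section SparseProx

variable {X E : Type*} [MeasurableSpace X] {μ : Measure X} [NormedAddCommGroup E]
  [InnerProductSpace ℝ E]

lemma inner_indicatorLp_self {S : Set X} (hS : MeasurableSet S) (r : Lp E 2 μ) :
    ⟪r, indicatorLp hS r⟫ = ‖indicatorLp hS r‖ ^ 2 := by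
  rw [← real_inner_self_eq_norm_sq, L2.inner_def, L2.inner_def]
  refine integral_congr_ae ?_
  filter_upwards [coeFn_indicatorLp hS r] with x hx
  by_cases hxS : x ∈ S <;> simp [hx, hxS]

/-- Perturbing `w` on its own support keeps it feasible, so the gradient of the model vanishes
there. -/
lemma IsProxStep.smul_eq_neg_indicatorLp {t : ℝ≥0∞} {g u w : Lp E 2 μ} {L α : ℝ}
    (hw : IsProxStep (sparseSet t) g u L α w) :
    α • w = -indicatorLp (measurableSet_support_Lp w) (g + L • (w - u)) := by
  have hinner := hw.inner_eq_zero
    (add_smul_indicatorLp_mem_sparseSet hw.1 (g + L • (w - u) + α • w))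
  rw [inner_indicatorLp_self, sq_eq_zero_iff, norm_eq_zero, map_add, map_smul,
    indicatorLp_support] at hinner
  exact eq_neg_of_add_eq_zero_right hinner

lemma tendsto_iterates_of_tendsto_gradient {t : ℝ≥0∞} {G : Lp E 2 μ → Lp E 2 μ} {K L α : ℝ}
    (hG : ∀ v w, ‖G v - G w‖ ≤ K * ‖v - w‖) (hα : α ≠ 0) {u : ℕ → Lp E 2 μ}
    (hu : ∀ k, IsProxStep (sparseSet t) (G (u k)) (u k) L α (u (k + 1)))
    (hsub : Tendsto (fun k => u (k + 1) - u k) atTop (𝓝 0))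
    (hsupp : ∀ᵐ x ∂μ, ∀ᶠ k in atTop, (x ∈ {y | u k y ≠ 0} ↔ x ∈ eventualSupport u))
    {g : Lp E 2 μ} {kn : ℕ → ℕ} (hkn : Tendsto kn atTop atTop)
    (hg : Tendsto (fun n => G (u (kn n + 1))) atTop (𝓝 g)) :
    Tendsto (fun n => u (kn n + 1)) atTop
      (𝓝 (-(1 / α) • indicatorLp (measurableSet_eventualSupport u) g)) := by
  have hgrad_sub : Tendsto (fun k => G (u (k + 1)) - G (u k)) atTop (𝓝 0) :=
    squeeze_zero_norm (fun k => hG _ _) (by simpa using hsub.norm.const_mul K)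
  have hresidual : Tendsto (fun n => G (u (kn n)) + L • (u (kn n + 1) - u (kn n))) atTop (𝓝 g) := by
    simpa using (hg.sub (hgrad_sub.comp hkn)).add ((hsub.comp hkn).const_smul L)
  have hsupp_kn : ∀ᵐ x ∂μ, ∀ᶠ n in atTop,
      (x ∈ {y | u (kn n + 1) y ≠ 0} ↔ x ∈ eventualSupport u) :=
    hsupp.mono fun x hx => ((tendsto_add_atTop_nat 1).comp hkn).eventually hx
  refine ((tendsto_indicatorLp ENNReal.ofNat_ne_top (fun n => measurableSet_support_Lp _)
    (measurableSet_eventualSupport u) hsupp_kn hresidual).const_smul (-(1 / α))).congr fun n => ?_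
  rw [neg_smul, ← smul_neg, ← (hu (kn n)).smul_eq_neg_indicatorLp, smul_smul,
    one_div_mul_cancel hα, one_smul]

theorem statement15_general {t : ℝ≥0∞} {f : Lp E 2 μ → ℝ} {G : Lp E 2 μ → Lp E 2 μ}
    {K L α σ : ℝ} (hf_bdd : BddBelow (range f))
    (hf : ∀ v, HasFDerivAt f (innerSL ℝ (G v)) v) (hG : ∀ v w, ‖G v - G w‖ ≤ K * ‖v - w‖)
    (hG_cc : CompletelyContinuous G) (hKL : K < L) (hα : 0 < α) {u : ℕ → Lp E 2 μ}
    (hu : ∀ k, IsProxStep (sparseSet t) (G (u k)) (u k) L α (u (k + 1)))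
    (hσ : 0 < σ) (hgap : ∀ᶠ k in atTop, ∀ᵐ x ∂μ, u k x ≠ 0 → σ ≤ ‖u k x‖)
    {ubar : Lp E 2 μ} {kn : ℕ → ℕ} (hkn : Tendsto kn atTop atTop)
    (hweak : WeaklyTendsto (fun n => u (kn n)) atTop ubar) :
    Tendsto (fun n => u (kn n)) atTop (𝓝 ubar) ∧
      ∀ᵐ x ∂μ, ubar x ≠ 0 → ubar x = -(1 / α) • G ubar x := by
  have hsum : Summable fun k => ‖u (k + 1) - u k‖ ^ 2 :=
    summable_norm_sub_sq_of_isProxStep hf_bdd hf hG hKL hα.le hu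
  have hsub : Tendsto (fun k => u (k + 1) - u k) atTop (𝓝 0) :=
    tendsto_zero_iff_norm_tendsto_zero.2 (by simpa using hsum.tendsto_atTop_zero.sqrt)
  have hsupp := ae_eventually_mem_support_iff two_ne_zero ENNReal.ofNat_ne_top
    (by simpa using hsum) hσ hgap
  have hpred : ∀ᶠ n in atTop, kn n - 1 + 1 = kn n :=
    (hkn.eventually_ge_atTop 1).mono fun n => Nat.sub_add_cancel
  have hstrong : Tendsto (fun n => u (kn n)) atTop
      (𝓝 (-(1 / α) • indicatorLp (measurableSet_eventualSupport u) (G ubar))) := by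
    refine (tendsto_iterates_of_tendsto_gradient hG hα.ne' hu hsub hsupp
      ((tendsto_sub_atTop_nat 1).comp hkn) ((hG_cc _ _ hweak).congr' ?_)).congr' ?_ <;>
    exact hpred.mono fun n hn => by simp [hn]
  have hubar := hweak.eq_of_tendsto hstrong
  refine ⟨hubar ▸ hstrong, ?_⟩
  filter_upwards [Lp.coeFn_smul (-(1 / α))
      (indicatorLp (measurableSet_eventualSupport u) (G ubar)),
    coeFn_indicatorLp (measurableSet_eventualSupport u) (G ubar)] with x hsmul hind hne
  have hx : ubar x = -(1 / α) • (eventualSupport u).indicator (G ubar) x := by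
    rw [← hind, ← Pi.smul_apply, ← hsmul, ← hubar]
  rw [hx, indicator_of_mem]
  by_contra hxA
  exact hne (by rw [hx, indicator_of_notMem hxA, smul_zero])

end SparseProx

lemma exists_pos_le_norm_of_sqrt_le {X E : Type*} [MeasurableSpace X] {μ : Measure X}
    [NormedAddCommGroup E] {p : ℝ≥0∞} {u : ℕ → Lp E p μ} {lam : ℕ → ℝ} {M : ℝ} (hM : 0 < M)
    (hbound : ∀ k, ∀ᵐ x ∂μ, u (k + 1) x ≠ 0 → √(2 * lam (k + 1) / M) ≤ ‖u (k + 1) x‖)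
    (hlam : ∃ c : ℝ, 0 < c ∧ ∀ᶠ k in atTop, c ≤ lam k) :
    ∃ σ > 0, ∀ᶠ k in atTop, ∀ᵐ x ∂μ, u k x ≠ 0 → σ ≤ ‖u k x‖ := by
  obtain ⟨c, hc, hc_le⟩ := hlam
  refine ⟨√(2 * c / M), by positivity, ?_⟩
  rw [← map_add_atTop_eq_nat 1, eventually_map]
  filter_upwards [(tendsto_add_atTop_nat 1).eventually hc_le] with k hk
  filter_upwards [hbound k] with x hx hne
  exact le_trans (by gcongr) (hx hne)

lemma AssumptionB.exists_pos_le_norm {Ω : Set (Fin d → ℝ)} {f : Lp ℝ 2 (mOmega Ω) → ℝ}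
    {gradf : Lp ℝ 2 (mOmega Ω) → Lp ℝ 2 (mOmega Ω)} {Lf α L : ℝ}
    (hB : AssumptionB Ω f gradf Lf α) (hL : Lf < L) {u : ℕ → Lp ℝ 2 (mOmega Ω)} {lam : ℕ → ℝ}
    (hbound : ∀ k, ∀ᵐ x ∂mOmega Ω,
      u (k + 1) x ≠ 0 → √(2 * lam (k + 1) / (L + α)) ≤ |u (k + 1) x|)
    (hlam : ∃ c : ℝ, 0 < c ∧ ∀ᶠ k in atTop, c ≤ lam k) :
    ∃ σ > 0, ∀ᶠ k in atTop, ∀ᵐ x ∂mOmega Ω, u k x ≠ 0 → σ ≤ ‖u k x‖ := by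
  rcases lt_or_ge Lf 0 with hneg | hnonneg
  · have := subsingleton_of_norm_sub_le_neg_mul hB.lipschitz hneg
    refine ⟨1, one_pos, .of_forall fun k => ?_⟩
    rw [Subsingleton.elim (u k) 0]
    filter_upwards [Lp.coeFn_zero ℝ 2 (mOmega Ω)] with x hx hne
    exact absurd hx hne
  · have hα := hB.alpha_nonneg
    exact exists_pos_le_norm_of_sqrt_le (by linarith) hbound hlam

lemma integral_mul_eq_inner {X : Type*} [MeasurableSpace X] {μ : Measure X} (v w : Lp ℝ 2 μ) :
    ∫ x, v x * w x ∂μ = ⟪v, w⟫ := by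
  simp only [L2.inner_def, mul_comm, RCLike.inner_apply, conj_trivial]

lemma SolvesSub.isProxStep {Ω : Set (Fin d → ℝ)} {f : Lp ℝ 2 (mOmega Ω) → ℝ}
    {gradf : Lp ℝ 2 (mOmega Ω) → Lp ℝ 2 (mOmega Ω)} {α L τ : ℝ} {uk u : Lp ℝ 2 (mOmega Ω)}
    (hu : SolvesSub Ω f gradf α L τ uk u) :
    IsProxStep (sparseSet (ENNReal.ofReal τ)) (gradf uk) uk L α u := by
  have hlinear (v : Lp ℝ 2 (mOmega Ω)) :
      ∫ x, gradf uk x * (v x - uk x) ∂mOmega Ω = ⟪gradf uk, v - uk⟫ := by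
    rw [← integral_mul_eq_inner]
    exact integral_congr_ae ((Lp.coeFn_sub v uk).mono fun x hx => by simp only [hx, Pi.sub_apply])
  refine ⟨hu.1, isMinOn_iff.2 fun v hv => ?_⟩
  have hmin := hu.2 v hv
  rw [hlinear, hlinear] at hmin
  simp only [proxModel]
  linarith

/-- Theorem `thm_strong_conv_iterates`: under Assumption (B) with `α > 0`,
`L > L_f`, and `∇f` completely continuous, if `(u_k)` are iterates of the proximal gradient
algorithm with multipliers `λ_k ≥ 0` (complementarity and support lower bound) and
`liminf λ_k > 0`, then every weakly converging subsequence `u_{k_n} ⇀ u̅` converges strongly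
in `L²(Ω)`, and a.e. `u̅(x) ≠ 0` implies `u̅(x) = −(1/α) ∇f(u̅)(x)`. -/
theorem statement15 (Ω : Set (Fin d → ℝ)) (hΩ : MeasurableSet Ω)
    (h_pos : 0 < volume Ω) (h_fin : volume Ω < ⊤)
    (τ : ℝ) (hτ : 0 < τ) (hτ' : ENNReal.ofReal τ < volume Ω)
    (f : Lp ℝ 2 (mOmega Ω) → ℝ) (gradf : Lp ℝ 2 (mOmega Ω) → Lp ℝ 2 (mOmega Ω))
    (Lf α : ℝ) (hB : AssumptionB Ω f gradf Lf α) (hα : 0 < α)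
    (L : ℝ) (hL : Lf < L)
    (h_cc : ∀ (v : ℕ → Lp ℝ 2 (mOmega Ω)) (vbar : Lp ℝ 2 (mOmega Ω)),
      (∀ φ : Lp ℝ 2 (mOmega Ω),
        Tendsto (fun k => ∫ x, v k x * φ x ∂mOmega Ω) atTop
          (𝓝 (∫ x, vbar x * φ x ∂mOmega Ω))) →
      Tendsto (fun k => ‖gradf (v k) - gradf vbar‖) atTop (𝓝 0))
    (u : ℕ → Lp ℝ 2 (mOmega Ω))
    (h_alg : ∀ k : ℕ, SolvesSub Ω f gradf α L τ (u k) (u (k + 1)))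
    (lam : ℕ → ℝ) (h_lam_nonneg : ∀ k, 0 ≤ lam k)
    (h_comp : ∀ k : ℕ, lam (k + 1) * ((mOmega Ω {x | u (k + 1) x ≠ 0}).toReal - τ) = 0)
    (h_bound : ∀ k : ℕ, ∀ᵐ x ∂mOmega Ω,
      u (k + 1) x ≠ 0 → Real.sqrt (2 * lam (k + 1) / (L + α)) ≤ |u (k + 1) x|)
    (h_liminf : ∃ c : ℝ, 0 < c ∧ ∀ᶠ k in atTop, c ≤ lam k) :
    ∀ (ubar : Lp ℝ 2 (mOmega Ω)) (kn : ℕ → ℕ), StrictMono kn →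
      (∀ φ : Lp ℝ 2 (mOmega Ω),
        Tendsto (fun n => ∫ x, u (kn n) x * φ x ∂mOmega Ω) atTop
          (𝓝 (∫ x, ubar x * φ x ∂mOmega Ω))) →
      Tendsto (fun n => ‖u (kn n) - ubar‖) atTop (𝓝 0) ∧
      (∀ᵐ x ∂mOmega Ω, ubar x ≠ 0 → ubar x = -(1 / α) * gradf ubar x) := by
  intro ubar kn hkn hweak
  obtain ⟨σ, hσ, hgap⟩ := hB.exists_pos_le_norm hL h_bound h_liminf
  simp only [integral_mul_eq_inner, ← tendsto_iff_norm_sub_tendsto_zero] at h_cc hweak ⊢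
  exact statement15_general (hB.bdd_below.imp fun _ => forall_mem_range.2) hB.deriv hB.lipschitz
    h_cc hL hα (fun k => (h_alg k).isProxStep) hσ hgap hkn.tendsto_atTop hweak
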